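/- arXiv:2203.00671 — 5 statements merged into one kernel-verified Lean document; each statement's English description precedes it below -/
import Mathlib

section
/- Let 0 < α ≤ 1/2 and let u⁻ < f < u⁺ be reals, and let Δ be a real with |Δ| ≤ (1/10)·min(u⁺ − f, f − u⁻). Then: (i) (u⁺ − f − Δ)^{−α} + (f + Δ − u⁻)^{−α} ≤ (u⁺ − f)^{−α} + (f − u⁻)^{−α} + α·((u⁺ − f)^{−1−α} − (f − u⁻)^{−1−α})·Δ + α·((u⁺ − f)^{−2−α} + (f − u⁻)^{−2−α})·Δ²; (ii) |(u⁺ − f − Δ)^{−1−α} − (u⁺ − f)^{−1−α}| ≤ 2|Δ|·(u⁺ − f)^{−2−α}; and (iii) |(f + Δ − u⁻)^{−1−α} − (f − u⁻)^{−1−α}| ≤ 2|Δ|·(f − u⁻)^{−2−α}. -/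
/-
By homogeneity everything reduces to `(1 + t) ^ (-α)` and `(1 + t) ^ (-1 - α)` with `t = ±Δ / x`,
where `x` is the distance from `f` to an endpoint. For `α = 1 / 2` the second-order bound is a
polynomial inequality after squaring. Since `2 * α ≤ 1`, Bernoulli's inequality for
`((1 + t) ^ (-1 / 2)) ^ (2 * α)` then carries it to all smaller exponents. The bound on
`(1 + t) ^ (-1 - α)` follows from it on division by `1 + t` when `t ≤ 0`, and from Bernoulli's
inequality for negative exponents when `0 ≤ t`.
-/

theorem one_add_mul_self_le_rpow_one_add_of_nonpos {s p : ℝ} (hs : -1 < s) (hp : p ≤ 0) :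
    1 + p * s ≤ (1 + s) ^ p := by
  have hpos : 0 < 1 + s := by linarith
  have hlog : Real.log (1 + s) ≤ s := by linarith [Real.log_le_sub_one_of_pos hpos]
  calc 1 + p * s ≤ Real.log (1 + s) * p + 1 := by
        linarith [mul_le_mul_of_nonpos_left hlog hp]
    _ ≤ Real.exp (Real.log (1 + s) * p) := Real.add_one_le_exp _
    _ = (1 + s) ^ p := (Real.rpow_def_of_pos hpos p).symm

theorem inv_sqrt_one_add_le {t : ℝ} (ht : -(1 / 4) ≤ t) :
    (√(1 + t))⁻¹ ≤ 1 - t / 2 + t ^ 2 / 2 := by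
  have hpos : 0 < 1 + t := by linarith
  have hcubic : 0 ≤ 1 + 3 * t - t ^ 2 + t ^ 3 := by
    nlinarith [mul_nonneg (neg_le_iff_add_nonneg.1 ht) (sq_nonneg (t - 1))]
  have hsq : 1 / (1 + t) ≤ (1 - t / 2 + t ^ 2 / 2) ^ 2 := by
    rw [div_le_iff₀ hpos]
    linarith [mul_nonneg (sq_nonneg t) hcubic]
  rw [← Real.sqrt_inv, inv_eq_one_div]
  exact Real.sqrt_le_iff.2 ⟨by nlinarith [sq_nonneg (t - 1)], hsq⟩

theorem one_add_rpow_neg_le {α t : ℝ} (hα₀ : 0 ≤ α) (hα : α ≤ 1 / 2) (ht : -(1 / 4) ≤ t) :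
    (1 + t) ^ (-α) ≤ 1 - α * t + α * t ^ 2 := by
  have hpos : 0 < 1 + t := by linarith
  have hsqrt : 0 ≤ (√(1 + t))⁻¹ := by positivity
  calc (1 + t) ^ (-α) = (√(1 + t))⁻¹ ^ (2 * α) := by
        rw [← Real.rpow_neg_eq_inv_rpow, ← Real.rpow_div_two_eq_sqrt _ hpos.le]
        ring_nf
    _ = (1 + ((√(1 + t))⁻¹ - 1)) ^ (2 * α) := by rw [add_sub_cancel]
    _ ≤ 1 + 2 * α * ((√(1 + t))⁻¹ - 1) :=
        rpow_one_add_le_one_add_mul_self (by linarith) (by linarith) (by linarith)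
    _ ≤ 1 + 2 * α * ((1 - t / 2 + t ^ 2 / 2) - 1) := by
        gcongr
        exact inv_sqrt_one_add_le ht
    _ = 1 - α * t + α * t ^ 2 := by ring

theorem one_add_rpow_neg_one_sub_le {α t : ℝ} (hα₀ : 0 ≤ α) (hα : α ≤ 1 / 2)
    (ht : -(1 / 5) ≤ t) (ht₀ : t ≤ 0) : (1 + t) ^ (-1 - α) ≤ 1 - 2 * t := by
  have hpos : 0 < 1 + t := by linarith
  have hfactor : 0 ≤ -t * ((1 - α) + (2 + α) * t) :=
    mul_nonneg (by linarith) (by nlinarith)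
  calc (1 + t) ^ (-1 - α) = (1 + t) ^ (-α) / (1 + t) := by
        rw [← Real.rpow_sub_one hpos.ne', neg_sub_comm]
    _ ≤ (1 - α * t + α * t ^ 2) / (1 + t) := by
        gcongr
        exact one_add_rpow_neg_le hα₀ hα (by linarith)
    _ ≤ 1 - 2 * t := by
        rw [div_le_iff₀ hpos]
        linarith

theorem abs_one_add_rpow_neg_one_sub_sub_one_le {α t : ℝ} (hα₀ : 0 ≤ α) (hα : α ≤ 1 / 2)
    (ht : -(1 / 5) ≤ t) : |(1 + t) ^ (-1 - α) - 1| ≤ 2 * |t| := by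
  rcases le_total t 0 with ht₀ | ht₀
  · have hone : 1 ≤ (1 + t) ^ (-1 - α) :=
      Real.one_le_rpow_of_pos_of_le_one_of_nonpos (by linarith) (by linarith) (by linarith)
    rw [abs_of_nonpos ht₀, abs_of_nonneg (sub_nonneg.2 hone)]
    linarith [one_add_rpow_neg_one_sub_le hα₀ hα ht ht₀]
  · have hone : (1 + t) ^ (-1 - α) ≤ 1 :=
      Real.rpow_le_one_of_one_le_of_nonpos (by linarith) (by linarith)
    have hbernoulli : 1 + (-1 - α) * t ≤ (1 + t) ^ (-1 - α) :=
      one_add_mul_self_le_rpow_one_add_of_nonpos (by linarith) (by linarith)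
    rw [abs_of_nonneg ht₀, abs_of_nonpos (sub_nonpos.2 hone)]
    linarith [mul_le_mul_of_nonneg_right hα ht₀]

theorem add_rpow_eq_rpow_mul_one_add_div {x d : ℝ} (hx : 0 < x) (hd : -x ≤ d) (p : ℝ) :
    (x + d) ^ p = x ^ p * (1 + d / x) ^ p := by
  have hnonneg : 0 ≤ 1 + d / x := by
    rw [one_add_div hx.ne']
    exact div_nonneg (by linarith) hx.le
  rw [← Real.mul_rpow hx.le hnonneg, mul_one_add, mul_div_cancel₀ d hx.ne']

theorem add_rpow_neg_le {α x d : ℝ} (hα₀ : 0 ≤ α) (hα : α ≤ 1 / 2) (hx : 0 < x)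
    (hd : -(x / 4) ≤ d) :
    (x + d) ^ (-α) ≤ x ^ (-α) - α * x ^ (-1 - α) * d + α * x ^ (-2 - α) * d ^ 2 := by
  have ht : -(1 / 4) ≤ d / x := by
    rw [le_div_iff₀ hx]
    linarith
  have hpow₁ : x ^ (-1 - α) = x ^ (-α) / x := by
    rw [← Real.rpow_sub_one hx.ne', neg_sub_comm]
  have hpow₂ : x ^ (-2 - α) = x ^ (-α) / x ^ 2 := by
    rw [← Real.rpow_sub_natCast hx.ne', Nat.cast_ofNat, neg_sub_comm]
  calc (x + d) ^ (-α) = x ^ (-α) * (1 + d / x) ^ (-α) :=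
        add_rpow_eq_rpow_mul_one_add_div hx (by linarith) _
    _ ≤ x ^ (-α) * (1 - α * (d / x) + α * (d / x) ^ 2) := by
        gcongr
        exact one_add_rpow_neg_le hα₀ hα ht
    _ = x ^ (-α) - α * x ^ (-1 - α) * d + α * x ^ (-2 - α) * d ^ 2 := by
        rw [hpow₁, hpow₂]
        ring

theorem abs_add_rpow_neg_one_sub_sub_rpow_le {α x d : ℝ} (hα₀ : 0 ≤ α) (hα : α ≤ 1 / 2)
    (hx : 0 < x) (hd : -(x / 5) ≤ d) :
    |(x + d) ^ (-1 - α) - x ^ (-1 - α)| ≤ 2 * |d| * x ^ (-2 - α) := by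
  have ht : -(1 / 5) ≤ d / x := by
    rw [le_div_iff₀ hx]
    linarith
  have hpow : x ^ (-2 - α) = x ^ (-1 - α) / x := by
    rw [← Real.rpow_sub_one hx.ne']
    ring_nf
  calc |(x + d) ^ (-1 - α) - x ^ (-1 - α)|
      = x ^ (-1 - α) * |(1 + d / x) ^ (-1 - α) - 1| := by
        rw [add_rpow_eq_rpow_mul_one_add_div hx (by linarith), ← mul_sub_one, abs_mul,
          abs_of_pos (Real.rpow_pos_of_pos hx _)]
    _ ≤ x ^ (-1 - α) * (2 * |d / x|) := by
        gcongr
        exact abs_one_add_rpow_neg_one_sub_sub_one_le hα₀ hα ht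
    _ = 2 * |d| * x ^ (-2 - α) := by
        rw [hpow, abs_div, abs_of_pos hx]
        ring

theorem stmt1_general {α lo hi f Δ : ℝ} (hα₀ : 0 ≤ α) (hα : α ≤ 1 / 2)
    (hlo : lo < f) (hhi : f < hi) (hΔlo : -((f - lo) / 5) ≤ Δ) (hΔhi : Δ ≤ (hi - f) / 5) :
    ((hi - f - Δ) ^ (-α) + (f + Δ - lo) ^ (-α)
        ≤ (hi - f) ^ (-α) + (f - lo) ^ (-α)
          + α * ((hi - f) ^ (-1 - α) - (f - lo) ^ (-1 - α)) * Δ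
          + α * ((hi - f) ^ (-2 - α) + (f - lo) ^ (-2 - α)) * Δ ^ 2) ∧
      |(hi - f - Δ) ^ (-1 - α) - (hi - f) ^ (-1 - α)| ≤ 2 * |Δ| * (hi - f) ^ (-2 - α) ∧
      |(f + Δ - lo) ^ (-1 - α) - (f - lo) ^ (-1 - α)| ≤ 2 * |Δ| * (f - lo) ^ (-2 - α) := by
  have hhi₀ : 0 < hi - f := sub_pos.2 hhi
  have hlo₀ : 0 < f - lo := sub_pos.2 hlo
  rw [sub_eq_add_neg (hi - f) Δ, add_sub_right_comm f Δ lo, ← abs_neg Δ]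
  refine ⟨?_, abs_add_rpow_neg_one_sub_sub_rpow_le hα₀ hα hhi₀ (by linarith), ?_⟩
  · have hupper := add_rpow_neg_le hα₀ hα hhi₀ (d := -Δ) (by linarith)
    have hlower := add_rpow_neg_le hα₀ hα hlo₀ (d := Δ) (by linarith)
    linarith
  · rw [abs_neg]
    exact abs_add_rpow_neg_one_sub_sub_rpow_le hα₀ hα hlo₀ hΔlo

/-- Taylor-expansion bounds for the barrier `x^{-α}`, `0 < α ≤ 1/2`:
for reals `lo < f < hi` and `|Δ| ≤ (1/10) min (hi - f) (f - lo)`, the three stated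
inequalities hold (real powers). -/
theorem stmt1 (α lo hi f Δ : ℝ)
    (hα : 0 < α) (hα' : α ≤ 1 / 2)
    (hlo : lo < f) (hhi : f < hi)
    (hΔ : |Δ| ≤ (1 / 10) * min (hi - f) (f - lo)) :
    ((hi - f - Δ) ^ (-α) + (f + Δ - lo) ^ (-α)
        ≤ (hi - f) ^ (-α) + (f - lo) ^ (-α)
          + α * ((hi - f) ^ (-1 - α) - (f - lo) ^ (-1 - α)) * Δ
          + α * ((hi - f) ^ (-2 - α) + (f - lo) ^ (-2 - α)) * Δ ^ 2) ∧
      |(hi - f - Δ) ^ (-1 - α) - (hi - f) ^ (-1 - α)| ≤ 2 * |Δ| * (hi - f) ^ (-2 - α) ∧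
      |(f + Δ - lo) ^ (-1 - α) - (f - lo) ^ (-1 - α)| ≤ 2 * |Δ| * (f - lo) ^ (-2 - α) := by
  obtain ⟨hΔhi, hΔlo⟩ := le_min_iff.1 ((div_le_iff₀' (by norm_num)).2 hΔ)
  exact stmt1_general hα.le hα' hlo hhi (by linarith [neg_abs_le Δ]) (by linarith [le_abs_self Δ])
end

section
/- Let f be strictly feasible with c^⊤f > F*, and let κ ∈ (0,1). Let g̃ ∈ ℝ^E satisfy ‖L(f)^{−1}(g̃ − g(f))‖_∞ ≤ κ/8, and let ℓ̃ ∈ ℝ^E_{>0} satisfy ℓ̃ ≈₂ ℓ(f); write L̃ = diag(ℓ̃). Let Δ ∈ ℝ^E be a nonzero circulation with g̃^⊤Δ ≤ −κ·‖L̃Δ‖₁ (so that g̃^⊤Δ < 0), and set η := −κ²/(50·g̃^⊤Δ) > 0. Then f + ηΔ is strictly feasible, c^⊤(f + ηΔ) > F*, and Φ(f + ηΔ) ≤ Φ(f) − κ²/500. -/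
open Finset

noncomputable section

/-- The `v`-entry of `Bᵀ f`, where `B` is the edge-vertex incidence matrix of the
directed graph with edge maps `tail, head`. -/
def excess {V E : Type} [Fintype E] [DecidableEq V] (tail head : E → V)
    (f : E → ℝ) (v : V) : ℝ :=
  ∑ e, f e * ((if tail e = v then (1 : ℝ) else 0) - (if head e = v then 1 else 0))

/-- Feasibility for the min-cost flow instance: `Bᵀ f = d` and `lo ≤ f ≤ hi`. -/
def IsFeasible {V E : Type} [Fintype E] [DecidableEq V] (tail head : E → V)
    (d : V → ℝ) (lo hi : E → ℝ) (f : E → ℝ) : Prop :=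
  (∀ v, excess tail head f v = d v) ∧ ∀ e, lo e ≤ f e ∧ f e ≤ hi e

/-- Cost `cᵀ f` of a flow. -/
def fcost {E : Type} [Fintype E] (c f : E → ℝ) : ℝ := ∑ e, c e * f e

/-- The barrier parameter `α = 1/(1000 log (m U))`. -/
def fAlpha (m : ℕ) (U : ℝ) : ℝ := 1 / (1000 * Real.log (m * U))

/-- The potential `Φ(f)`. -/
def fPhi {E : Type} [Fintype E] (m : ℕ) (U Fstar : ℝ) (c lo hi f : E → ℝ) : ℝ :=
  20 * m * Real.log (fcost c f - Fstar)
    + ∑ e, ((hi e - f e) ^ (-fAlpha m U) + (f e - lo e) ^ (-fAlpha m U))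

/-- The length `ℓ(f)_e = (u⁺_e - f_e)^{-1-α} + (f_e - u⁻_e)^{-1-α}`. -/
def flen {E : Type} (m : ℕ) (U : ℝ) (lo hi f : E → ℝ) (e : E) : ℝ :=
  (hi e - f e) ^ (-1 - fAlpha m U) + (f e - lo e) ^ (-1 - fAlpha m U)

/-- The gradient `g(f)_e = 20m (cᵀf - F*)⁻¹ c_e + α (u⁺_e - f_e)^{-1-α} - α (f_e - u⁻_e)^{-1-α}`. -/
def fgrad {E : Type} [Fintype E] (m : ℕ) (U Fstar : ℝ) (c lo hi f : E → ℝ) (e : E) : ℝ :=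
  20 * m * (fcost c f - Fstar)⁻¹ * c e
    + fAlpha m U * (hi e - f e) ^ (-1 - fAlpha m U)
    - fAlpha m U * (f e - lo e) ^ (-1 - fAlpha m U)

/-!
Write `δ = ηΔ`. The choice of `η` gives `‖L(f)δ‖₁ ≤ κ/25` and `g̃ᵀδ = -κ²/50`. Since every slack
is at most `2U ≤ (mU)²` and `(mU)^α` is nearly `1`, the length of an edge is, up to a factor
`25/24`, at least the inverse of its smaller slack, so `δ` moves each edge by at most a `κ/24`
fraction of its slack. In particular `f + 2δ` is still feasible (as `κ ≤ 12`), whence `cᵀ(f + 2δ)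
≥ F*`, and `f + δ`, halfway between `f` and `f + 2δ`, costs more than `F*`. The logarithm lies
below its tangent, and the convex barrier exceeds its tangent by at most `(κ/12) α ‖L(f)δ‖₁`, so
`Φ` changes by at most `g(f)ᵀδ + κ²/300`; replacing `g(f)` by `g̃` costs another `κ²/200`, and
`g̃ᵀδ` outweighs both.
-/

section Scalar

variable {a r t x y δ : ℝ}

theorem log_add_le_log_add_inv_mul (hx : 0 < x) (hxδ : 0 < x + δ) :
    Real.log (x + δ) ≤ Real.log x + x⁻¹ * δ := by
  have h := Real.log_le_sub_one_of_pos (div_pos hxδ hx)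
  rw [Real.log_div hxδ.ne' hx.ne', add_div, div_self hx.ne'] at h
  rw [inv_mul_eq_div]
  linarith

theorem one_sub_rpow_neg_le (ht : t ≤ 1 / 2) (ha : 0 ≤ a) (ha1 : a ≤ 1) :
    (1 - t) ^ (-a) ≤ 1 + a * (t + 2 * t ^ 2) := by
  have h1t : 0 < 1 - t := by linarith
  have inv_eq : (1 - t)⁻¹ = 1 + t / (1 - t) := by field_simp; ring
  have quad : t / (1 - t) ≤ t + 2 * t ^ 2 := by
    rw [div_le_iff₀ h1t]
    nlinarith [mul_nonneg (sq_nonneg t) (by linarith : 0 ≤ 1 - 2 * t)]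
  calc (1 - t) ^ (-a) = (1 + t / (1 - t)) ^ a := by
        rw [← inv_eq, Real.inv_rpow h1t.le, Real.rpow_neg h1t.le]
    _ ≤ 1 + a * (t / (1 - t)) :=
        rpow_one_add_le_one_add_mul_self (by rw [le_div_iff₀ h1t]; linarith) ha ha1
    _ ≤ 1 + a * (t + 2 * t ^ 2) := by gcongr

theorem sub_rpow_neg_le (hx : 0 < x) (hδ : δ ≤ x / 2) (ha : 0 ≤ a) (ha1 : a ≤ 1) :
    (x - δ) ^ (-a) ≤ x ^ (-a) + a * x ^ (-1 - a) * (δ + 2 * (δ ^ 2 / x)) := by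
  have ht : δ / x ≤ 1 / 2 := by rw [div_le_iff₀ hx]; linarith
  calc (x - δ) ^ (-a) = x ^ (-a) * (1 - δ / x) ^ (-a) := by
        rw [← Real.mul_rpow hx.le (by linarith), mul_sub, mul_one, mul_div_cancel₀ _ hx.ne']
    _ ≤ x ^ (-a) * (1 + a * (δ / x + 2 * (δ / x) ^ 2)) := by
        gcongr
        exact one_sub_rpow_neg_le ht ha ha1
    _ = x ^ (-a) + a * x ^ (-1 - a) * (δ + 2 * (δ ^ 2 / x)) := by
        rw [show -1 - a = -a - 1 by ring, Real.rpow_sub_one hx.ne']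
        field_simp

theorem sub_rpow_neg_le_of_abs_le (hx : 0 < x) (hr : r ≤ 1 / 2) (hδ : |δ| ≤ r * x)
    (ha : 0 ≤ a) (ha1 : a ≤ 1) :
    (x - δ) ^ (-a) ≤ x ^ (-a) + a * x ^ (-1 - a) * (δ + 2 * r * |δ|) := by
  have half : δ ≤ x / 2 := by nlinarith [le_abs_self δ]
  have sq_le : δ ^ 2 / x ≤ r * |δ| := by
    rw [div_le_iff₀ hx, ← sq_abs]
    nlinarith [abs_nonneg δ]
  refine (sub_rpow_neg_le hx half ha ha1).trans ?_
  rw [mul_assoc 2 r]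
  gcongr

theorem sub_rpow_neg_add_add_rpow_neg_le (hx : 0 < x) (hy : 0 < y) (hr : r ≤ 1 / 2)
    (hδx : |δ| ≤ r * x) (hδy : |δ| ≤ r * y) (ha : 0 ≤ a) (ha1 : a ≤ 1) :
    (x - δ) ^ (-a) + (y + δ) ^ (-a) ≤
      x ^ (-a) + y ^ (-a) + (a * x ^ (-1 - a) - a * y ^ (-1 - a)) * δ
        + 2 * r * a * ((x ^ (-1 - a) + y ^ (-1 - a)) * |δ|) := by
  have upper := sub_rpow_neg_le_of_abs_le hx hr hδx ha ha1
  have lower := sub_rpow_neg_le_of_abs_le (δ := -δ) hy hr (by rwa [abs_neg]) ha ha1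
  rw [sub_neg_eq_add, abs_neg] at lower
  linarith

theorem le_mul_of_rpow_mul_le {C k : ℝ} (hx : 0 < x) (hC : x ^ a ≤ C) (hδ : 0 ≤ δ)
    (h : x ^ (-1 - a) * δ ≤ k) : δ ≤ C * k * x := by
  have cancel : x ^ a * x ^ (-1 - a) * x = 1 := by
    rw [← Real.rpow_add hx, show a + (-1 - a) = -1 by ring, Real.rpow_neg_one,
      inv_mul_cancel₀ hx.ne']
  calc δ = x ^ a * (x ^ (-1 - a) * δ) * x := by linear_combination -δ * cancel
    _ ≤ C * k * x := by
        have : 0 ≤ C := (Real.rpow_nonneg hx.le a).trans hC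
        gcongr

end Scalar

section Exponent

variable {m : ℕ} {U x : ℝ}

theorem fAlpha_pos (hmU : 1 < m * U) : 0 < fAlpha m U := by
  have := Real.log_pos hmU
  rw [fAlpha]
  positivity

theorem fAlpha_le_one (hmU : 2 ≤ m * U) : fAlpha m U ≤ 1 := by
  have := Real.log_le_log two_pos hmU
  have := Real.log_two_gt_d9
  exact div_le_one_of_le₀ (by linarith) (by linarith)

theorem mul_rpow_fAlpha (hmU : 1 < m * U) : (m * U) ^ fAlpha m U = Real.exp (1 / 1000) := by
  have := Real.log_pos hmU
  rw [Real.rpow_def_of_pos (by linarith), fAlpha]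
  congr 1
  field_simp

theorem rpow_fAlpha_le (hmU : 2 ≤ m * U) (hx : 0 ≤ x) (hxU : x ≤ 2 * U) :
    x ^ fAlpha m U ≤ 25 / 24 := by
  have x_le : x ≤ (m * U) ^ 2 := by
    have hm : 1 ≤ (m : ℝ) := by
      rw [Nat.one_le_cast, Nat.one_le_iff_ne_zero]
      rintro rfl
      norm_num at hmU
    have hU : 0 ≤ U := by linarith
    nlinarith [mul_le_mul_of_nonneg_right hm hU]
  have exp_le : Real.exp (1 / 1000) ≤ 1000 / 999 :=
    (Real.exp_bound_div_one_sub_of_interval (by norm_num) (by norm_num)).trans_eq (by norm_num)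
  calc x ^ fAlpha m U ≤ ((m * U) ^ 2) ^ fAlpha m U :=
        Real.rpow_le_rpow hx x_le (fAlpha_pos (by linarith)).le
    _ = Real.exp (1 / 1000) ^ 2 := by
        rw [← mul_rpow_fAlpha (one_lt_two.trans_le hmU), Real.rpow_pow_comm (zero_le_two.trans hmU)]
    _ ≤ (1000 / 999) ^ 2 := by gcongr
    _ ≤ 25 / 24 := by norm_num

end Exponent

section Flow

variable {V E : Type} [Fintype E] [DecidableEq V] {tail head : E → V} {d : V → ℝ}
  {c lo hi f δ : E → ℝ}

/-- Circulations: flows `δ` with `Bᵀ δ = 0`, the directions that preserve the demand. -/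
def IsCirculation (tail head : E → V) (δ : E → ℝ) : Prop :=
  ∀ v, excess tail head δ v = 0

/-- Strictly feasible flows, i.e. those at which the barrier in `fPhi` is defined:
`Bᵀ f = d` and `lo < f < hi`. -/
def IsStrictlyFeasible (tail head : E → V) (d : V → ℝ) (lo hi f : E → ℝ) : Prop :=
  (∀ v, excess tail head f v = d v) ∧ ∀ e, lo e < f e ∧ f e < hi e

theorem excess_add (f g : E → ℝ) (v : V) :
    excess tail head (f + g) v = excess tail head f v + excess tail head g v := by
  simp only [excess, Pi.add_apply, add_mul, sum_add_distrib]

theorem excess_smul (s : ℝ) (f : E → ℝ) (v : V) :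
    excess tail head (s • f) v = s * excess tail head f v := by
  simp only [excess, Pi.smul_apply, smul_eq_mul, mul_assoc, mul_sum]

theorem fcost_add (c f g : E → ℝ) : fcost c (f + g) = fcost c f + fcost c g := by
  simp only [fcost, Pi.add_apply, mul_add, sum_add_distrib]

theorem fcost_smul (s : ℝ) (c f : E → ℝ) : fcost c (s • f) = s * fcost c f := by
  simp only [fcost, Pi.smul_apply, smul_eq_mul, mul_left_comm, mul_sum]

theorem IsCirculation.smul (hδ : IsCirculation tail head δ) (s : ℝ) :
    IsCirculation tail head (s • δ) := fun v => by
  rw [excess_smul, hδ v, mul_zero]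

theorem IsCirculation.excess_add (hδ : IsCirculation tail head δ) (f : E → ℝ) (v : V) :
    excess tail head (f + δ) v = excess tail head f v := by
  rw [_root_.excess_add, hδ v, add_zero]

theorem IsStrictlyFeasible.add (hf : IsStrictlyFeasible tail head d lo hi f)
    (hδ : IsCirculation tail head δ) (hlo : ∀ e, |δ e| < f e - lo e)
    (hhi : ∀ e, |δ e| < hi e - f e) : IsStrictlyFeasible tail head d lo hi (f + δ) := by
  refine ⟨fun v => (hδ.excess_add f v).trans (hf.1 v), fun e => ?_⟩
  rw [Pi.add_apply]
  constructor <;> linarith [hlo e, hhi e, neg_abs_le (δ e), le_abs_self (δ e)]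

theorem IsFeasible.add (hf : IsFeasible tail head d lo hi f)
    (hδ : IsCirculation tail head δ) (hlo : ∀ e, |δ e| ≤ f e - lo e)
    (hhi : ∀ e, |δ e| ≤ hi e - f e) : IsFeasible tail head d lo hi (f + δ) := by
  refine ⟨fun v => (hδ.excess_add f v).trans (hf.1 v), fun e => ?_⟩
  rw [Pi.add_apply]
  constructor <;> linarith [hlo e, hhi e, neg_abs_le (δ e), le_abs_self (δ e)]

theorem IsStrictlyFeasible.isFeasible (hf : IsStrictlyFeasible tail head d lo hi f) :
    IsFeasible tail head d lo hi f :=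
  ⟨hf.1, fun e => ⟨(hf.2 e).1.le, (hf.2 e).2.le⟩⟩

theorem lt_fcost_add {Fstar : ℝ} (hf : Fstar < fcost c f)
    (hf2 : Fstar ≤ fcost c (f + (2 : ℝ) • δ)) : Fstar < fcost c (f + δ) := by
  rw [fcost_add, fcost_smul] at hf2
  rw [fcost_add]
  linarith

end Flow

section Length

variable {E : Type} {m : ℕ} {U : ℝ} {lo hi f : E → ℝ}

theorem flen_pos {e : E} (hf : lo e < f e ∧ f e < hi e) : 0 < flen m U lo hi f e :=
  add_pos (Real.rpow_pos_of_pos (sub_pos.2 hf.2) _) (Real.rpow_pos_of_pos (sub_pos.2 hf.1) _)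

/-- The distance `min (u⁺_e - f_e) (f_e - u⁻_e)` from the flow on `e` to the nearer capacity, the
scale against which steps are measured. -/
def slack (lo hi f : E → ℝ) (e : E) : ℝ := min (hi e - f e) (f e - lo e)

theorem slack_pos {e : E} (hf : lo e < f e ∧ f e < hi e) : 0 < slack lo hi f e :=
  lt_min (sub_pos.2 hf.2) (sub_pos.2 hf.1)

theorem slack_rpow_le_flen {e : E} (hf : lo e < f e ∧ f e < hi e) :
    slack lo hi f e ^ (-1 - fAlpha m U) ≤ flen m U lo hi f e := by
  have hhi := Real.rpow_nonneg (sub_pos.2 hf.2).le (-1 - fAlpha m U)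
  have hlo := Real.rpow_nonneg (sub_pos.2 hf.1).le (-1 - fAlpha m U)
  rcases min_choice (hi e - f e) (f e - lo e) with h | h <;> rw [slack, h, flen] <;> linarith

theorem abs_le_mul_slack {e : E} {k δ : ℝ} (hmU : 2 ≤ m * U) (hcap : hi e - lo e ≤ 2 * U)
    (hf : lo e < f e ∧ f e < hi e) (h : flen m U lo hi f e * |δ| ≤ k) :
    |δ| ≤ 25 / 24 * k * slack lo hi f e := by
  have hpos := slack_pos hf
  have slack_le : slack lo hi f e ≤ 2 * U := (min_le_left _ _).trans (by linarith)
  refine le_mul_of_rpow_mul_le hpos (rpow_fAlpha_le hmU hpos.le slack_le) (abs_nonneg δ)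
    (le_trans ?_ h)
  gcongr
  exact slack_rpow_le_flen hf

variable [Fintype E] {Δ δ : E → ℝ}

/-- The norm `‖L(f)Δ‖₁` of a step `Δ` at the flow `f`. The absolute value is only on `Δ` because
lengths are positive at the flows considered. -/
def flenNorm (m : ℕ) (U : ℝ) (lo hi f Δ : E → ℝ) : ℝ := ∑ e, flen m U lo hi f e * |Δ e|

theorem flenNorm_smul {s : ℝ} (hs : 0 ≤ s) (Δ : E → ℝ) :
    flenNorm m U lo hi f (s • Δ) = s * flenNorm m U lo hi f Δ := by
  simp only [flenNorm, Pi.smul_apply, smul_eq_mul, abs_mul, abs_of_nonneg hs, mul_left_comm,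
    mul_sum]

theorem flen_mul_abs_le_flenNorm (hf : ∀ e, lo e < f e ∧ f e < hi e) (Δ : E → ℝ) (e : E) :
    flen m U lo hi f e * |Δ e| ≤ flenNorm m U lo hi f Δ :=
  single_le_sum (f := fun e => flen m U lo hi f e * |Δ e|)
    (fun e _ => mul_nonneg (flen_pos (hf e)).le (abs_nonneg _)) (mem_univ e)

theorem flenNorm_nonneg (hf : ∀ e, lo e < f e ∧ f e < hi e) (Δ : E → ℝ) :
    0 ≤ flenNorm m U lo hi f Δ :=
  sum_nonneg fun e _ => mul_nonneg (flen_pos (hf e)).le (abs_nonneg _)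

theorem flenNorm_pos (hf : ∀ e, lo e < f e ∧ f e < hi e) (hΔ : Δ ≠ 0) :
    0 < flenNorm m U lo hi f Δ := by
  obtain ⟨e, he⟩ := Function.ne_iff.mp hΔ
  exact (mul_pos (flen_pos (hf e)) (abs_pos.mpr he)).trans_le (flen_mul_abs_le_flenNorm hf Δ e)

theorem flenNorm_le_two_mul_sum {ltil : E → ℝ} (hl : ∀ e, flen m U lo hi f e / 2 ≤ ltil e)
    (Δ : E → ℝ) : flenNorm m U lo hi f Δ ≤ 2 * ∑ e, |ltil e * Δ e| := by
  rw [flenNorm, mul_sum]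
  refine sum_le_sum fun e _ => ?_
  have := mul_le_mul_of_nonneg_right ((hl e).trans (le_abs_self _)) (abs_nonneg (Δ e))
  rw [abs_mul]
  linarith

end Length

section Potential

variable {E : Type} [Fintype E] {m : ℕ} {U Fstar r ε : ℝ} {c lo hi f g δ : E → ℝ}

theorem sum_fgrad_mul (m : ℕ) (U Fstar : ℝ) (c lo hi f δ : E → ℝ) :
    ∑ e, fgrad m U Fstar c lo hi f e * δ e =
      20 * m * ((fcost c f - Fstar)⁻¹ * fcost c δ)
        + ∑ e, (fAlpha m U * (hi e - f e) ^ (-1 - fAlpha m U)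
          - fAlpha m U * (f e - lo e) ^ (-1 - fAlpha m U)) * δ e := by
  rw [fcost.eq_def c δ, mul_sum, mul_sum, ← sum_add_distrib]
  refine sum_congr rfl fun e _ => ?_
  rw [fgrad]
  ring

theorem sum_fgrad_mul_le (hg : ∀ e, |g e - fgrad m U Fstar c lo hi f e| ≤ ε * flen m U lo hi f e)
    (δ : E → ℝ) :
    ∑ e, fgrad m U Fstar c lo hi f e * δ e ≤ ∑ e, g e * δ e + ε * flenNorm m U lo hi f δ := by
  rw [flenNorm, mul_sum, ← sum_add_distrib]
  refine sum_le_sum fun e _ => ?_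
  have h := mul_le_mul_of_nonneg_right (hg e) (abs_nonneg (δ e))
  rw [← abs_mul] at h
  linarith [neg_abs_le ((g e - fgrad m U Fstar c lo hi f e) * δ e)]

theorem sum_barrier_add_le (hα : 0 ≤ fAlpha m U) (hα1 : fAlpha m U ≤ 1)
    (hf : ∀ e, lo e < f e ∧ f e < hi e) (hr0 : 0 ≤ r) (hr : r ≤ 1 / 2)
    (hδ : ∀ e, |δ e| ≤ r * slack lo hi f e) :
    ∑ e, ((hi e - (f + δ) e) ^ (-fAlpha m U) + ((f + δ) e - lo e) ^ (-fAlpha m U)) ≤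
      ∑ e, ((hi e - f e) ^ (-fAlpha m U) + (f e - lo e) ^ (-fAlpha m U))
        + ∑ e, (fAlpha m U * (hi e - f e) ^ (-1 - fAlpha m U)
          - fAlpha m U * (f e - lo e) ^ (-1 - fAlpha m U)) * δ e
        + 2 * r * fAlpha m U * flenNorm m U lo hi f δ := by
  rw [flenNorm, mul_sum, ← sum_add_distrib, ← sum_add_distrib]
  refine sum_le_sum fun e _ => ?_
  rw [Pi.add_apply, ← sub_sub, add_sub_right_comm]
  exact sub_rpow_neg_add_add_rpow_neg_le (sub_pos.2 (hf e).2) (sub_pos.2 (hf e).1) hr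
    ((hδ e).trans (mul_le_mul_of_nonneg_left (min_le_left _ _) hr0))
    ((hδ e).trans (mul_le_mul_of_nonneg_left (min_le_right _ _) hr0)) hα hα1

theorem fPhi_add_le (hα : 0 ≤ fAlpha m U) (hα1 : fAlpha m U ≤ 1)
    (hf : ∀ e, lo e < f e ∧ f e < hi e) (hfc : Fstar < fcost c f)
    (hfδ : Fstar < fcost c (f + δ)) (hr0 : 0 ≤ r) (hr : r ≤ 1 / 2)
    (hδ : ∀ e, |δ e| ≤ r * slack lo hi f e) :
    fPhi m U Fstar c lo hi (f + δ) ≤ fPhi m U Fstar c lo hi f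
      + ∑ e, fgrad m U Fstar c lo hi f e * δ e
      + 2 * r * fAlpha m U * flenNorm m U lo hi f δ := by
  have log_le : Real.log (fcost c (f + δ) - Fstar) ≤
      Real.log (fcost c f - Fstar) + (fcost c f - Fstar)⁻¹ * fcost c δ := by
    rw [fcost_add] at hfδ ⊢
    rw [add_sub_right_comm]
    exact log_add_le_log_add_inv_mul (by linarith) (by linarith)
  have weighted := mul_le_mul_of_nonneg_left log_le (by positivity : (0 : ℝ) ≤ 20 * m)
  have barrier := sum_barrier_add_le hα hα1 hf hr0 hr hδ
  rw [fPhi, fPhi, sum_fgrad_mul]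
  linarith

end Potential

section Step

variable {V E : Type} [Fintype E] [DecidableEq V] {tail head : E → V} {m : ℕ} {U : ℝ}
  {d : V → ℝ} {c lo hi : E → ℝ} {Fstar : ℝ} {f : E → ℝ} {κ : ℝ} {gtil ltil Δ δ : E → ℝ}

theorem fPhi_add_le_sub_sq (hmU : 2 ≤ m * U) (hcap : ∀ e, hi e - lo e ≤ 2 * U)
    (hFstar : ∀ f', IsFeasible tail head d lo hi f' → Fstar ≤ fcost c f')
    (hf : IsStrictlyFeasible tail head d lo hi f) (hfc : Fstar < fcost c f)
    (hκ : 0 < κ) (hκ12 : κ ≤ 12)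
    (hg : ∀ e, |gtil e - fgrad m U Fstar c lo hi f e| ≤ κ / 8 * flen m U lo hi f e)
    (hδ : IsCirculation tail head δ) (hδnorm : flenNorm m U lo hi f δ ≤ κ / 25)
    (hδg : ∑ e, gtil e * δ e ≤ -κ ^ 2 / 50) :
    IsStrictlyFeasible tail head d lo hi (f + δ) ∧ Fstar < fcost c (f + δ) ∧
      fPhi m U Fstar c lo hi (f + δ) ≤ fPhi m U Fstar c lo hi f - κ ^ 2 / 500 := by
  have hα := (fAlpha_pos (one_lt_two.trans_le hmU)).le
  have hα1 := fAlpha_le_one hmU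
  have small : ∀ e, |δ e| ≤ κ / 24 * slack lo hi f e := fun e =>
    (abs_le_mul_slack hmU (hcap e) (hf.2 e)
      ((flen_mul_abs_le_flenNorm hf.2 δ e).trans hδnorm)).trans_eq (by ring)
  have half : ∀ e, 2 * |δ e| ≤ slack lo hi f e := fun e => by
    nlinarith [small e, slack_pos (hf.2 e)]
  have double_abs : ∀ e, |((2 : ℝ) • δ) e| = 2 * |δ e| := fun e => by
    rw [Pi.smul_apply, smul_eq_mul, abs_mul, abs_two]
  have lt_slack : ∀ e, |δ e| < slack lo hi f e := fun e => by
    linarith [half e, slack_pos (hf.2 e)]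
  have double_feasible : IsFeasible tail head d lo hi (f + (2 : ℝ) • δ) :=
    hf.isFeasible.add (hδ.smul 2)
      (fun e => (double_abs e).trans_le ((half e).trans (min_le_right _ _)))
      (fun e => (double_abs e).trans_le ((half e).trans (min_le_left _ _)))
  have hfδ : Fstar < fcost c (f + δ) := lt_fcost_add hfc (hFstar _ double_feasible)
  refine ⟨hf.add hδ (fun e => (lt_slack e).trans_le (min_le_right _ _))
    (fun e => (lt_slack e).trans_le (min_le_left _ _)), hfδ, ?_⟩
  have taylor := fPhi_add_le hα hα1 hf.2 hfc hfδ (by positivity) (by linarith) small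
  have gradient := sum_fgrad_mul_le hg δ
  have gradient_error : κ / 8 * flenNorm m U lo hi f δ ≤ κ / 8 * (κ / 25) := by gcongr
  have norm_nonneg := flenNorm_nonneg (m := m) (U := U) hf.2 δ
  have barrier_error : 2 * (κ / 24) * fAlpha m U * flenNorm m U lo hi f δ ≤
      2 * (κ / 24) * 1 * (κ / 25) := by gcongr
  nlinarith [sq_nonneg κ]

theorem stmt3_general (hmU : 2 ≤ m * U) (hcap : ∀ e, hi e - lo e ≤ 2 * U)
    (hFstar : ∀ f', IsFeasible tail head d lo hi f' → Fstar ≤ fcost c f')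
    (hf : IsStrictlyFeasible tail head d lo hi f) (hfc : Fstar < fcost c f)
    (hκ : 0 < κ) (hκ12 : κ ≤ 12)
    (hg : ∀ e, |gtil e - fgrad m U Fstar c lo hi f e| ≤ κ / 8 * flen m U lo hi f e)
    (hl : ∀ e, flen m U lo hi f e / 2 ≤ ltil e)
    (hΔ : IsCirculation tail head Δ) (hΔne : Δ ≠ 0)
    (hΔg : ∑ e, gtil e * Δ e ≤ -κ * ∑ e, |ltil e * Δ e|) :
    let fη : E → ℝ := f + (-κ ^ 2 / (50 * ∑ e, gtil e * Δ e)) • Δ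
    IsStrictlyFeasible tail head d lo hi fη ∧ Fstar < fcost c fη ∧
      fPhi m U Fstar c lo hi fη ≤ fPhi m U Fstar c lo hi f - κ ^ 2 / 500 := by
  set G := ∑ e, gtil e * Δ e with hG
  set η := -κ ^ 2 / (50 * G) with hη
  have norm_pos := flenNorm_pos (m := m) (U := U) hf.2 hΔne
  have norm_le : κ * flenNorm m U lo hi f Δ ≤ -2 * G := by
    nlinarith [flenNorm_le_two_mul_sum hl Δ]
  have G_neg : G < 0 := by nlinarith
  have η_pos : 0 < η := div_pos_of_neg_of_neg (by nlinarith) (by linarith)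
  have ηG : η * G = -κ ^ 2 / 50 := by
    have := G_neg.ne
    rw [hη]
    field_simp
  refine fPhi_add_le_sub_sq hmU hcap hFstar hf hfc hκ hκ12 hg (hΔ.smul η) ?_ (le_of_eq ?_)
  · rw [flenNorm_smul η_pos.le]
    refine le_of_mul_le_mul_left ?_ hκ
    nlinarith [mul_le_mul_of_nonneg_left norm_le η_pos.le]
  · simp only [Pi.smul_apply, smul_eq_mul, mul_left_comm _ η, ← mul_sum, ← hG, ηG]

end Step

/-- one-step potential decrease: an approximately-optimal min-ratio
circulation step decreases the potential by `κ²/500`. -/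
theorem stmt3
    {V E : Type} [Fintype V] [Fintype E] [DecidableEq V]
    (tail head : E → V)
    (m : ℕ) (hmcard : m = Fintype.card E) (hm : 2 ≤ m)
    (U : ℝ) (hU : 2 ≤ U)
    (d : V → ℝ) (c lo hi : E → ℝ)
    (hcap : ∀ e, -U ≤ lo e ∧ lo e < hi e ∧ hi e ≤ U)
    (Fstar : ℝ)
    (hFstar : ∃ f0, IsFeasible tail head d lo hi f0 ∧ fcost c f0 = Fstar ∧
      ∀ f', IsFeasible tail head d lo hi f' → Fstar ≤ fcost c f')
    (f : E → ℝ)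
    (hfd : ∀ v, excess tail head f v = d v)
    (hfs : ∀ e, lo e < f e ∧ f e < hi e)
    (hfc : Fstar < fcost c f)
    (κ : ℝ) (hκ : 0 < κ ∧ κ < 1)
    (gtil : E → ℝ)
    (hg : ∀ e, |gtil e - fgrad m U Fstar c lo hi f e| ≤ κ / 8 * flen m U lo hi f e)
    (ltil : E → ℝ) (hlpos : ∀ e, 0 < ltil e)
    (hl : ∀ e, flen m U lo hi f e / 2 ≤ ltil e ∧ ltil e ≤ 2 * flen m U lo hi f e)
    (Δ : E → ℝ) (hΔcirc : ∀ v, excess tail head Δ v = 0) (hΔne : Δ ≠ 0)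
    (hΔg : ∑ e, gtil e * Δ e ≤ -κ * ∑ e, |ltil e * Δ e|) :
    let η : ℝ := -κ ^ 2 / (50 * ∑ e, gtil e * Δ e)
    let fη : E → ℝ := fun e => f e + η * Δ e
    ((∀ v, excess tail head fη v = d v) ∧ (∀ e, lo e < fη e ∧ fη e < hi e)) ∧
      Fstar < fcost c fη ∧
      fPhi m U Fstar c lo hi fη ≤ fPhi m U Fstar c lo hi f - κ ^ 2 / 500 := by
  have hmU : 2 ≤ m * U := by
    have : (2 : ℝ) ≤ m := by exact_mod_cast hm
    nlinarith
  obtain ⟨_, _, _, hmin⟩ := hFstar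
  exact stmt3_general hmU (fun e => by linarith [hcap e]) hmin ⟨hfd, hfs⟩ hfc hκ.1
    (by linarith) hg (fun e => (hl e).1) hΔcirc hΔne hΔg
end
end

section
/- (Sampling sparsifies an expander's cuts.) Let G be an undirected multigraph on finite vertex set X with no self-loops that is a ψ-expander for some ψ ∈ (0,1], with deg_G(v) ≥ Δ_min ≥ 1 for every v ∈ X. Let C ≥ 1 and let m ≥ 2 satisfy m ≥ |X| and m ≥ |E(G)|. Set p := min(96·C·log(m)/(ψ·Δ_min), 1), and form a random subgraph H of G by retaining each edge of G independently with probability p. Then with probability at least 1 − 4·m^{−2C}, every subset S ⊆ X satisfies (1/2)·|E_H(S, X∖S)|/p ≤ |E_G(S, X∖S)| ≤ 2·|E_H(S, X∖S)|/p. -/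
open Finset MeasureTheory
open scoped Classical

noncomputable section

/-- Degree of `v` in the multigraph with endpoint maps `a, b`, restricted to the edges
satisfying `P`. -/
def degIn {X E : Type} [Fintype E] (a b : E → X) (P : E → Prop) (v : X) : ℕ :=
  (univ.filter fun e => P e ∧ (a e = v ∨ b e = v)).card

/-- Volume of a vertex set `S`: the sum of degrees of its vertices. -/
def volIn {X E : Type} [Fintype E] (a b : E → X) (P : E → Prop) (S : Finset X) : ℕ :=
  ∑ v ∈ S, degIn a b P v

/-- Number of edges (satisfying `P`) with exactly one endpoint in `S`. -/
def cutIn {X E : Type} [Fintype E] (a b : E → X) (P : E → Prop) (S : Finset X) : ℕ :=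
  (univ.filter fun e => P e ∧ ((a e ∈ S ∧ b e ∉ S) ∨ (a e ∉ S ∧ b e ∈ S))).card

/-!
Each cut of `H` is a sum of independent `{0, 1}`-valued variables, so by Chernoff's bound a cut of
`G` with `k` edges fails to be preserved with probability at most `2 * exp (-p * k / 8)`. A union
bound over all cuts is affordable because expansion makes the cuts large: a set `S` with
`s = min |S| |Sᶜ|` has at least `ψ * Δmin * s` crossing edges, so its failure probability is at most
`2 * q ^ s` with `q = exp (-p * ψ * Δmin / 8)`, while by the binomial theorem
`∑ q ^ |S| = (1 + q) ^ |X| - 1` over nonempty `S`. The choice of `p` makes `q ≤ m ^ (-12 * C)`.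
-/

section Chernoff

open Real ProbabilityTheory InformationTheory

lemma exp_mul_le_one_add_mul (t : ℝ) {x : ℝ} (hx : x ∈ Set.Icc (0 : ℝ) 1) :
    exp (t * x) ≤ 1 + x * (exp t - 1) := by
  have convex := convexOn_exp.2 (Set.mem_univ 0) (Set.mem_univ t) (sub_nonneg.2 hx.2) hx.1
    (sub_add_cancel 1 x)
  simp only [smul_eq_mul, mul_zero, zero_add, exp_zero, mul_one] at convex
  rw [mul_comm]
  linarith

variable {Ω ι : Type*} [MeasurableSpace Ω] {μ : Measure Ω}

lemma mgf_le_exp_of_mem_Icc [IsProbabilityMeasure μ] {X : Ω → ℝ} (hX : AEMeasurable X μ)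
    (h01 : ∀ᵐ ω ∂μ, X ω ∈ Set.Icc (0 : ℝ) 1) (t : ℝ) :
    mgf X μ t ≤ exp (μ[X] * (exp t - 1)) := by
  have hint : Integrable X μ := .of_mem_Icc 0 1 hX h01
  calc mgf X μ t ≤ ∫ ω, (1 + X ω * (exp t - 1)) ∂μ :=
        integral_mono_ae (integrable_exp_mul_of_mem_Icc hX h01)
          ((integrable_const 1).add (hint.mul_const _))
          (h01.mono fun ω hω => exp_mul_le_one_add_mul t hω)
    _ = μ[X] * (exp t - 1) + 1 := by
        rw [integral_add (integrable_const 1) (hint.mul_const _), integral_mul_const]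
        simp [add_comm]
    _ ≤ exp (μ[X] * (exp t - 1)) := add_one_le_exp _

variable {X : ι → Ω → ℝ} (hindep : iIndepFun X μ) (hX : ∀ i, AEMeasurable (X i) μ)
  (h01 : ∀ i, ∀ᵐ ω ∂μ, X i ω ∈ Set.Icc (0 : ℝ) 1) (s : Finset ι)

include hindep hX h01

lemma mgf_sum_le_exp_of_mem_Icc (t : ℝ) :
    mgf (∑ i ∈ s, X i) μ t ≤ exp ((∑ i ∈ s, μ[X i]) * (exp t - 1)) := by
  have := hindep.isProbabilityMeasure
  rw [hindep.mgf_sum₀ hX, sum_mul, exp_sum]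
  exact prod_le_prod (fun _ _ => mgf_nonneg) fun i _ => mgf_le_exp_of_mem_Icc (hX i) (h01 i) t

lemma integrable_exp_mul_sum_of_mem_Icc (t : ℝ) :
    Integrable (fun ω => exp (t * (∑ i ∈ s, X i) ω)) μ := by
  have := hindep.isProbabilityMeasure
  refine integrable_exp_mul_of_mem_Icc (a := 0) (b := #s)
    (Finset.aemeasurable_sum s fun i _ => hX i) ?_
  filter_upwards [(Finset.eventually_all s).2 fun i _ => h01 i] with ω hω
  rw [Finset.sum_apply]
  exact ⟨sum_nonneg fun i hi => (hω i hi).1, by simpa using sum_le_sum fun i hi => (hω i hi).2⟩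

lemma measureReal_mul_sum_integral_le_sum_le {r : ℝ} (hr : 1 ≤ r) :
    μ.real {ω | r * ∑ i ∈ s, μ[X i] ≤ ∑ i ∈ s, X i ω} ≤
      exp (-((∑ i ∈ s, μ[X i]) * klFun r)) := by
  have := hindep.isProbabilityMeasure
  set M := ∑ i ∈ s, μ[X i]
  calc μ.real {ω | r * M ≤ ∑ i ∈ s, X i ω}
      ≤ exp (-log r * (r * M)) * mgf (∑ i ∈ s, X i) μ (log r) := by
        simpa only [Finset.sum_apply] using measure_ge_le_exp_mul_mgf (r * M) (log_nonneg hr)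
          (integrable_exp_mul_sum_of_mem_Icc hindep hX h01 s (log r))
    _ ≤ exp (-log r * (r * M)) * exp (M * (exp (log r) - 1)) := by
        gcongr
        exact mgf_sum_le_exp_of_mem_Icc hindep hX h01 s _
    _ = exp (-(M * klFun r)) := by
        rw [← exp_add, exp_log (by positivity), klFun_apply]
        ring_nf

lemma measureReal_sum_le_mul_sum_integral_le {r : ℝ} (hr0 : 0 < r) (hr1 : r ≤ 1) :
    μ.real {ω | ∑ i ∈ s, X i ω ≤ r * ∑ i ∈ s, μ[X i]} ≤
      exp (-((∑ i ∈ s, μ[X i]) * klFun r)) := by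
  have := hindep.isProbabilityMeasure
  set M := ∑ i ∈ s, μ[X i]
  calc μ.real {ω | ∑ i ∈ s, X i ω ≤ r * M}
      ≤ exp (-log r * (r * M)) * mgf (∑ i ∈ s, X i) μ (log r) := by
        simpa only [Finset.sum_apply] using measure_le_le_exp_mul_mgf (r * M)
          (log_nonpos hr0.le hr1) (integrable_exp_mul_sum_of_mem_Icc hindep hX h01 s (log r))
    _ ≤ exp (-log r * (r * M)) * exp (M * (exp (log r) - 1)) := by
        gcongr
        exact mgf_sum_le_exp_of_mem_Icc hindep hX h01 s _
    _ = exp (-(M * klFun r)) := by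
        rw [← exp_add, exp_log hr0, klFun_apply]
        ring_nf

lemma measureReal_sum_notMem_Icc_le :
    μ.real {ω | ∑ i ∈ s, X i ω ∉
        Set.Icc ((∑ i ∈ s, μ[X i]) / 2) (2 * ∑ i ∈ s, μ[X i])} ≤
      2 * exp (-(∑ i ∈ s, μ[X i]) / 8) := by
  have := hindep.isProbabilityMeasure
  have upper := measureReal_mul_sum_integral_le_sum_le hindep hX h01 s one_le_two
  have lower := measureReal_sum_le_mul_sum_integral_le hindep hX h01 s (r := 1 / 2)
    (by norm_num) (by norm_num)
  have mean_nonneg : 0 ≤ ∑ i ∈ s, μ[X i] :=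
    sum_nonneg fun i _ => integral_nonneg_of_ae ((h01 i).mono fun _ h => h.1)
  set M := ∑ i ∈ s, μ[X i]
  have klFun_two : 1 / 8 ≤ klFun 2 := by
    rw [klFun_apply]
    linarith [log_two_gt_d9]
  have klFun_half : 1 / 8 ≤ klFun (1 / 2) := by
    have log_half : log (1 / 2) = -log 2 := by rw [one_div, log_inv]
    rw [klFun_apply, log_half]
    linarith [log_two_lt_d9]
  calc μ.real {ω | ∑ i ∈ s, X i ω ∉ Set.Icc (M / 2) (2 * M)}
      ≤ μ.real ({ω | 2 * M ≤ ∑ i ∈ s, X i ω} ∪ {ω | ∑ i ∈ s, X i ω ≤ 1 / 2 * M}) := by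
        refine measureReal_mono fun ω hω => ?_
        by_contra! h
        simp only [Set.mem_union, Set.mem_ofPred_eq, not_or, not_le] at h
        exact hω ⟨by linarith, h.1.le⟩
    _ ≤ exp (-(M * klFun 2)) + exp (-(M * klFun (1 / 2))) :=
        (measureReal_union_le _ _).trans (add_le_add upper lower)
    _ ≤ exp (-M / 8) + exp (-M / 8) := by
        gcongr ?_ + ?_ <;> rw [exp_le_exp] <;> nlinarith
    _ = 2 * exp (-M / 8) := by ring

end Chernoff

section Sampling

open ProbabilityTheory unitInterval

/-- The law of a random subset of `E`, encoded by its indicator function `E → Bool`, that retains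
each element independently with probability `p`. -/
abbrev bernoulliSampling (E : Type*) [Fintype E] (p : I) : Measure (E → Bool) :=
  Measure.pi fun _ => Ber(true, false, p)

variable {E : Type*} [Fintype E] (p : I)

lemma measureReal_card_filter_notMem_Icc_le (s : Finset E) :
    (bernoulliSampling E p).real
        {ω | (#{e ∈ s | ω e = true} : ℝ) ∉ Set.Icc (p * #s / 2 : ℝ) (2 * (p * #s))} ≤
      2 * Real.exp (-(p * #s) / 8) := by
  let retained (x : Bool) : ℝ := if x = true then 1 else 0
  have integral_retained (e : E) :
      ∫ ω : E → Bool, retained (ω e) ∂bernoulliSampling E p = p := by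
    rw [integral_comp_eval .of_discrete, integral_bernoulliMeasure]
    simp [retained]
  have tail := measureReal_sum_notMem_Icc_le
    (μ := bernoulliSampling E p) (X := fun e ω => retained (ω e))
    (iIndepFun_pi fun _ => .of_discrete) (fun _ => .of_discrete)
    (fun e => .of_forall fun ω => by dsimp only [retained]; split_ifs <;> simp) s
  simp only [integral_retained, sum_const, nsmul_eq_mul, mul_comm (#s : ℝ)] at tail
  simpa only [retained, sum_boole] using tail

lemma ae_bernoulliSampling_one_forall_eq_true :
    ∀ᵐ ω ∂bernoulliSampling E 1, ∀ e, ω e = true := by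
  rw [ae_all_iff]
  intro e
  have eval := (measurePreserving_eval (fun _ : E => Ber(true, false, 1)) e).quasiMeasurePreserving
  refine eval.ae (p := (· = true)) ?_
  simp

lemma bernoulliMeasure_eq_ofReal_smul_dirac {Ω : Type*} [MeasurableSpace Ω] (x y : Ω) :
    Ber(x, y, p) =
      ENNReal.ofReal p • Measure.dirac x + ENNReal.ofReal (1 - p) • Measure.dirac y := by
  have coe_eq : ENNReal.ofReal p = toNNReal p := ENNReal.ofReal_eq_coe_nnreal p.2.1
  have coe_symm_eq : ENNReal.ofReal (1 - p) = toNNReal (σ p) :=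
    ENNReal.ofReal_eq_coe_nnreal (σ p).2.1
  rw [bernoulliMeasure_def, coe_eq, coe_symm_eq]
  rfl

end Sampling

section SubsetSum

variable (X : Type*) [Fintype X]

lemma sum_nonempty_pow_card {R : Type*} [CommRing R] (q : R) :
    ∑ S : Finset X with S.Nonempty, q ^ #S = (1 + q) ^ Fintype.card X - 1 := by
  have nonempty_eq : ({S : Finset X | S.Nonempty} : Finset (Finset X)) = univ.erase ∅ := by
    ext S
    simp [nonempty_iff_ne_empty]
  have binomial : ∑ S : Finset X, q ^ #S = (1 + q) ^ Fintype.card X := by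
    simpa [add_comm] using Fintype.sum_pow_mul_eq_add_pow X q 1
  rw [nonempty_eq, sum_erase_eq_sub (mem_univ _), binomial, card_empty, pow_zero]

lemma sum_ne_univ_pow_card_compl {R : Type*} [CommRing R] (q : R) :
    ∑ S : Finset X with S ≠ univ, q ^ #Sᶜ = (1 + q) ^ Fintype.card X - 1 := by
  rw [← sum_nonempty_pow_card]
  exact sum_bijective compl compl_bijective (by simp [nonempty_iff_ne_empty]) fun _ _ => rfl

lemma sum_pow_min_card_card_compl_le {q : ℝ} (hq : 0 ≤ q) :
    ∑ S : Finset X with S.Nonempty ∧ S ≠ univ, q ^ min #S #Sᶜ ≤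
      2 * ((1 + q) ^ Fintype.card X - 1) := by
  calc ∑ S : Finset X with S.Nonempty ∧ S ≠ univ, q ^ min #S #Sᶜ
      ≤ ∑ S : Finset X with S.Nonempty ∧ S ≠ univ, (q ^ #S + q ^ #Sᶜ) := by
        refine sum_le_sum fun S _ => ?_
        rcases min_choice #S #Sᶜ with h | h <;> rw [h]
        · exact le_add_of_nonneg_right (by positivity)
        · exact le_add_of_nonneg_left (by positivity)
    _ ≤ (∑ S : Finset X with S.Nonempty, q ^ #S) + ∑ S : Finset X with S ≠ univ, q ^ #Sᶜ := by
        rw [sum_add_distrib]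
        gcongr with S _ S _
        · exact And.left
        · exact And.right
    _ = 2 * ((1 + q) ^ Fintype.card X - 1) := by
        rw [sum_nonempty_pow_card, sum_ne_univ_pow_card_compl, two_mul]

end SubsetSum

lemma one_add_pow_sub_one_le_two_mul {q : ℝ} (hq : 0 ≤ q) {n : ℕ} (hnq : n * q ≤ 1) :
    (1 + q) ^ n - 1 ≤ 2 * (n * q) := by
  have hnq0 : 0 ≤ n * q := by positivity
  calc (1 + q) ^ n - 1 ≤ Real.exp q ^ n - 1 := by
        gcongr
        linarith [Real.add_one_le_exp q]
    _ = Real.exp (n * q) - 1 := by rw [Real.exp_nat_mul]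
    _ ≤ |Real.exp (n * q) - 1| := le_abs_self _
    _ ≤ 2 * |n * q| := Real.abs_exp_sub_one_le (by rwa [abs_of_nonneg hnq0])
    _ = 2 * (n * q) := by rw [abs_of_nonneg hnq0]

lemma two_mul_mul_rpow_le_rpow {m C : ℝ} (hm : 2 ≤ m) (hC : 1 / 5 ≤ C) :
    2 * (m * m ^ (-(12 * C))) ≤ m ^ (-(2 * C)) := by
  have hm0 : 0 < m := by linarith
  calc 2 * (m * m ^ (-(12 * C))) ≤ m * (m * m ^ (-(12 * C))) := by gcongr
    _ = m ^ (1 + (1 + -(12 * C))) := by simp only [Real.rpow_add hm0, Real.rpow_one]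
    _ ≤ m ^ (-(2 * C)) := Real.rpow_le_rpow_of_exponent_le (by linarith) (by linarith)

lemma exp_neg_mul_div_eight_le_rpow {p C m k : ℝ} (hk : 0 < k) (hm : 0 < m)
    (hp : 96 * C * Real.log m / k ≤ p) :
    Real.exp (-(p * k) / 8) ≤ m ^ (-(12 * C)) := by
  rw [div_le_iff₀ hk] at hp
  rw [Real.rpow_def_of_pos hm, Real.exp_le_exp]
  linarith

section Multigraph

variable {X E : Type} [Fintype E] (a b : E → X)

/-- The edges of the multigraph with endpoint maps `a`, `b` that have exactly one endpoint in `S`,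
as a set rather than as the number `cutIn`. -/
def cutEdges (S : Finset X) : Finset E :=
  {e | (a e ∈ S ∧ b e ∉ S) ∨ (a e ∉ S ∧ b e ∈ S)}

lemma cutIn_eq_card_filter_cutEdges (P : E → Prop) [DecidablePred P] (S : Finset X) :
    cutIn a b P S = #{e ∈ cutEdges a b S | P e} := by
  rw [cutIn, cutEdges, filter_filter]
  congr 1
  ext e
  simp [and_comm]

lemma cutIn_true_eq_card_cutEdges (S : Finset X) :
    cutIn a b (fun _ => True) S = #(cutEdges a b S) := by
  rw [cutIn_eq_card_filter_cutEdges, filter_true]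

lemma cutEdges_eq_empty [Fintype X] {S : Finset X} (hS : ¬(S.Nonempty ∧ S ≠ univ)) :
    cutEdges a b S = ∅ := by
  rw [not_and_or, not_nonempty_iff_eq_empty, not_not] at hS
  rcases hS with rfl | rfl <;> simp [cutEdges]

variable {a b} in
lemma mul_card_le_volIn {P : E → Prop} {d : ℝ} (hdeg : ∀ v, d ≤ degIn a b P v) (S : Finset X) :
    d * #S ≤ volIn a b P S := by
  rw [volIn, Nat.cast_sum, mul_comm, ← nsmul_eq_mul]
  exact card_nsmul_le_sum S _ d fun v _ => hdeg v

/-- The multigraph with endpoint maps `a`, `b` is a `ψ`-expander: every cut has at least `ψ` times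
as many edges as the volume of its smaller side. -/
def IsExpander [Fintype X] (ψ : ℝ) : Prop :=
  ∀ S : Finset X, S.Nonempty → S ≠ univ →
    ψ * min (volIn a b (fun _ => True) S : ℝ) (volIn a b (fun _ => True) Sᶜ : ℝ) ≤
      (cutIn a b (fun _ => True) S : ℝ)

/-- The samples `ω` (where `ω e` says whether the edge `e` is retained) for which the cut of `S`
keeps between half and twice its expected number `p * cutIn` of edges. The condition avoids dividing
by `p`, so that it is meaningful for `p = 0` as well. -/
def cutPreservingSamples (p : ℝ) (S : Finset X) : Set (E → Bool) :=
  {ω | (cutIn a b (fun e => ω e = true) S : ℝ) ∈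
    Set.Icc (p * cutIn a b (fun _ => True) S / 2) (2 * (p * cutIn a b (fun _ => True) S))}

lemma cutPreservingSamples_eq_univ [Fintype X] (p : ℝ) {S : Finset X}
    (hS : ¬(S.Nonempty ∧ S ≠ univ)) : cutPreservingSamples a b p S = Set.univ := by
  simp [cutPreservingSamples, cutIn_eq_card_filter_cutEdges, cutEdges_eq_empty a b hS]

end Multigraph

section CutSampling

open ProbabilityTheory unitInterval

variable {X E : Type} [Fintype E]

lemma measureReal_compl_iInter_cutPreservingSamples_one (a b : E → X) :
    (bernoulliSampling E 1).real (⋂ S, cutPreservingSamples a b 1 S)ᶜ = 0 := by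
  rw [measureReal_eq_zero_iff, ← mem_ae_iff]
  filter_upwards [ae_bernoulliSampling_one_forall_eq_true] with ω hω
  refine Set.mem_iInter.2 fun S => ?_
  simp only [cutPreservingSamples, Set.mem_ofPred_eq, hω, one_mul]
  constructor <;> linarith

variable [Fintype X] {a b : E → X} {ψ d : ℝ}

lemma IsExpander.mul_min_card_card_compl_le_card_cutEdges (hexp : IsExpander a b ψ) (hψ : 0 ≤ ψ)
    (hd : 0 ≤ d) (hdeg : ∀ v, d ≤ degIn a b (fun _ => True) v) {S : Finset X} (hS : S.Nonempty)
    (hS' : S ≠ univ) : ψ * d * (min #S #Sᶜ : ℕ) ≤ #(cutEdges a b S) := by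
  rw [← cutIn_true_eq_card_cutEdges, mul_assoc, Nat.cast_min, mul_min_of_nonneg _ _ hd]
  exact le_trans (by gcongr <;> exact mul_card_le_volIn hdeg _) (hexp S hS hS')

lemma IsExpander.measureReal_compl_cutPreservingSamples_le (hexp : IsExpander a b ψ) (hψ : 0 ≤ ψ)
    (hd : 0 ≤ d) (hdeg : ∀ v, d ≤ degIn a b (fun _ => True) v) (p : I) {S : Finset X}
    (hS : S.Nonempty) (hS' : S ≠ univ) :
    (bernoulliSampling E p).real (cutPreservingSamples a b p S)ᶜ ≤
      2 * Real.exp (-(p * (ψ * d)) / 8) ^ min #S #Sᶜ := by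
  have large_cut := mul_le_mul_of_nonneg_left
    (hexp.mul_min_card_card_compl_le_card_cutEdges hψ hd hdeg hS hS') p.2.1
  calc (bernoulliSampling E p).real (cutPreservingSamples a b p S)ᶜ
      ≤ 2 * Real.exp (-(p * #(cutEdges a b S)) / 8) := by
        simpa only [cutPreservingSamples, cutIn_eq_card_filter_cutEdges, filter_true,
          Set.compl_ofPred] using measureReal_card_filter_notMem_Icc_le p (cutEdges a b S)
    _ ≤ 2 * Real.exp (-(p * (ψ * d)) / 8) ^ min #S #Sᶜ := by
        rw [← Real.exp_nat_mul]
        gcongr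
        linarith

lemma IsExpander.measureReal_compl_iInter_cutPreservingSamples_le (hexp : IsExpander a b ψ)
    (hψ : 0 ≤ ψ) (hd : 0 ≤ d) (hdeg : ∀ v, d ≤ degIn a b (fun _ => True) v) (p : I) :
    (bernoulliSampling E p).real (⋂ S, cutPreservingSamples a b p S)ᶜ ≤
      4 * ((1 + Real.exp (-(p * (ψ * d)) / 8)) ^ Fintype.card X - 1) := by
  set q := Real.exp (-(p * (ψ * d)) / 8)
  let cuts : Finset (Finset X) := {S | S.Nonempty ∧ S ≠ univ}
  have compl_subset : (⋂ S, cutPreservingSamples a b p S)ᶜ ⊆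
      ⋃ S ∈ cuts, (cutPreservingSamples a b p S)ᶜ := by
    rw [Set.compl_iInter]
    refine Set.iUnion_subset fun S => ?_
    by_cases hS : S.Nonempty ∧ S ≠ univ
    · exact Set.subset_biUnion_of_mem (u := fun S => (cutPreservingSamples a b p S)ᶜ)
        (by simpa [cuts] using hS)
    · simp [cutPreservingSamples_eq_univ a b p hS]
  calc (bernoulliSampling E p).real (⋂ S, cutPreservingSamples a b p S)ᶜ
      ≤ (bernoulliSampling E p).real (⋃ S ∈ cuts, (cutPreservingSamples a b p S)ᶜ) :=
        measureReal_mono compl_subset (measure_ne_top _ _)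
    _ ≤ ∑ S ∈ cuts, (bernoulliSampling E p).real (cutPreservingSamples a b p S)ᶜ :=
        measureReal_biUnion_finset_le _ _
    _ ≤ ∑ S ∈ cuts, 2 * q ^ min #S #Sᶜ := by
        refine sum_le_sum fun S hS => ?_
        obtain ⟨nonempty, ne_univ⟩ := (mem_filter.1 hS).2
        exact hexp.measureReal_compl_cutPreservingSamples_le hψ hd hdeg p nonempty ne_univ
    _ ≤ 2 * (2 * ((1 + q) ^ Fintype.card X - 1)) := by
        rw [← mul_sum]
        gcongr
        exact sum_pow_min_card_card_compl_le X (Real.exp_pos _).le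
    _ = 4 * ((1 + q) ^ Fintype.card X - 1) := by ring

lemma IsExpander.measureReal_compl_iInter_cutPreservingSamples_le_rpow (hexp : IsExpander a b ψ)
    (hψ : 0 < ψ) (hd : 0 < d) (hdeg : ∀ v, d ≤ degIn a b (fun _ => True) v)
    {C m : ℝ} (hC : 1 / 5 ≤ C) (hm : 2 ≤ m) (hmX : Fintype.card X ≤ m) {p : I}
    (hp : min (96 * C * Real.log m / (ψ * d)) 1 ≤ p) :
    (bernoulliSampling E p).real (⋂ S, cutPreservingSamples a b p S)ᶜ ≤
      4 * m ^ (-(2 * C)) := by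
  have hm0 : 0 < m := by linarith
  rcases min_le_iff.1 hp with hp | hp
  · set q := Real.exp (-(p * (ψ * d)) / 8)
    have hq0 : 0 ≤ q := (Real.exp_pos _).le
    have hnq : 2 * (Fintype.card X * q) ≤ m ^ (-(2 * C)) := by
      refine le_trans ?_ (two_mul_mul_rpow_le_rpow hm hC)
      gcongr
      exact exp_neg_mul_div_eight_le_rpow (by positivity) hm0 hp
    have hnq1 : Fintype.card X * q ≤ 1 := by
      have : m ^ (-(2 * C)) ≤ 1 := Real.rpow_le_one_of_one_le_of_nonpos (by linarith) (by linarith)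
      linarith
    calc (bernoulliSampling E p).real (⋂ S, cutPreservingSamples a b p S)ᶜ
        ≤ 4 * ((1 + q) ^ Fintype.card X - 1) :=
          hexp.measureReal_compl_iInter_cutPreservingSamples_le hψ.le hd.le hdeg p
      _ ≤ 4 * (2 * (Fintype.card X * q)) := by
          gcongr
          exact one_add_pow_sub_one_le_two_mul hq0 hnq1
      _ ≤ 4 * m ^ (-(2 * C)) := by gcongr
  · obtain rfl : p = 1 := le_antisymm unitInterval.le_one' hp
    rw [Set.Icc.coe_one, measureReal_compl_iInter_cutPreservingSamples_one]
    positivity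

theorem stmt10_general (hψ : 0 < ψ) (hd : 0 < d) (hdeg : ∀ v, d ≤ degIn a b (fun _ => True) v)
    (hexp : IsExpander a b ψ) {C m : ℝ} (hC : 1 / 5 ≤ C) (hm : 2 ≤ m) (hmX : Fintype.card X ≤ m)
    {p : I} (hp : min (96 * C * Real.log m / (ψ * d)) 1 ≤ p) :
    ENNReal.ofReal (1 - 4 * m ^ (-(2 * C))) ≤
      (bernoulliSampling E p) {ω | ∀ S : Finset X,
        1 / 2 * (cutIn a b (fun e => ω e = true) S : ℝ) / p ≤ cutIn a b (fun _ => True) S ∧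
          (cutIn a b (fun _ => True) S : ℝ) ≤ 2 * cutIn a b (fun e => ω e = true) S / p} := by
  have hp0 : (0 : ℝ) < p := by
    have : 0 < Real.log m := Real.log_pos (by linarith)
    exact (lt_min (by positivity) one_pos).trans_le hp
  have failure := hexp.measureReal_compl_iInter_cutPreservingSamples_le_rpow hψ hd hdeg hC hm hmX hp
  rw [probReal_compl_eq_one_sub .of_discrete] at failure
  calc ENNReal.ofReal (1 - 4 * m ^ (-(2 * C)))
      ≤ ENNReal.ofReal ((bernoulliSampling E p).real
          (⋂ S, cutPreservingSamples a b p S)) := ENNReal.ofReal_le_ofReal (by linarith)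
    _ = (bernoulliSampling E p) (⋂ S, cutPreservingSamples a b p S) :=
        ofReal_measureReal
    _ ≤ _ := by
        refine measure_mono fun ω hω S => ?_
        obtain ⟨lower, upper⟩ := Set.mem_iInter.1 hω S
        rw [div_le_iff₀ hp0, le_div_iff₀ hp0]
        constructor <;> linarith

end CutSampling

/-- sampling sparsifies an expander's cuts: retaining each edge of a
`ψ`-expander independently with probability `p = min(96 C log m/(ψ Δ_min), 1)` yields,
with probability at least `1 - 4 m^{-2C}`, a subgraph whose cuts approximate all cuts of
`G` within a factor `2` after rescaling by `1/p`. -/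
theorem stmt10
    {X E : Type} [Fintype X] [Fintype E]
    (a b : E → X) (hab : ∀ e, a e ≠ b e)
    (ψ : ℝ) (hψ0 : 0 < ψ) (hψ1 : ψ ≤ 1)
    (Δmin : ℝ) (hΔmin : 1 ≤ Δmin)
    (hdeg : ∀ v, Δmin ≤ (degIn a b (fun _ => True) v : ℝ))
    (hexp : ∀ S : Finset X, S.Nonempty → S ≠ univ →
      ψ * min (volIn a b (fun _ => True) S : ℝ) (volIn a b (fun _ => True) Sᶜ : ℝ)
        ≤ (cutIn a b (fun _ => True) S : ℝ))
    (C : ℝ) (hC : 1 ≤ C)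
    (m : ℕ) (hm : 2 ≤ m) (hmX : Fintype.card X ≤ m) (hmE : Fintype.card E ≤ m) :
    let p : ℝ := min (96 * C * Real.log m / (ψ * Δmin)) 1
    let μ : Measure (E → Bool) := Measure.pi fun _ =>
      ENNReal.ofReal p • Measure.dirac true + ENNReal.ofReal (1 - p) • Measure.dirac false
    ENNReal.ofReal (1 - 4 * (m : ℝ) ^ (-(2 * C))) ≤
      μ {ω : E → Bool | ∀ S : Finset X,
        1 / 2 * (cutIn a b (fun e => ω e = true) S : ℝ) / p
            ≤ (cutIn a b (fun _ => True) S : ℝ) ∧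
          (cutIn a b (fun _ => True) S : ℝ)
            ≤ 2 * (cutIn a b (fun e => ω e = true) S : ℝ) / p} := by
  intro p _
  have hp : p ∈ unitInterval := ⟨by positivity, min_le_right _ _⟩
  simpa only [bernoulliSampling, bernoulliMeasure_eq_ofReal_smul_dirac] using
    stmt10_general (p := ⟨p, hp⟩) hψ0 (by linarith) hdeg hexp (by linarith) (mod_cast hm)
      (mod_cast hmX) le_rfl
end
end

section
/- Let G be an undirected multigraph on finite vertex set X with no self-loops that is a ψ-expander for some ψ ∈ (0,1]. Let H be a subgraph of G (same vertex set, E(H) ⊆ E(G), same endpoints), let p ∈ (0,1], and suppose every subset S ⊆ X satisfies (1/2)·|E_H(S, X∖S)|/p ≤ |E_G(S, X∖S)| ≤ 2·|E_H(S, X∖S)|/p. Then H is a (ψ/4)-expander. -/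
open Finset
open scoped Classical

noncomputable section

/-! Without self-loops the degree of a vertex is the size of the cut around it, so comparing the
cuts of two multigraphs also compares their degrees, hence their volumes. On the smaller side of a
cut this gives `vol_H ≲ vol_G ≤ cut_G / ψ ≲ cut_H / ψ`, where each of the two cut comparisons costs
one constant factor. -/

section Expansion

variable {X E E' : Type} [Fintype E] [Fintype E'] {a b : E → X} {a' b' : E' → X}
  {P : E → Prop} {Q : E' → Prop}

theorem cutIn_singleton (hab : ∀ e, a e ≠ b e) (v : X) :
    cutIn a b P {v} = degIn a b P v := by
  have cut_iff_incident (e : E) : (a e = v ∧ b e ≠ v ∨ a e ≠ v ∧ b e = v) ↔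
      (a e = v ∨ b e = v) := by
    have := hab e
    grind
  simp only [cutIn, degIn, mem_singleton, cut_iff_incident]

theorem mul_volIn_le_volIn {α : ℝ} {S : Finset X}
    (hdeg : ∀ v ∈ S, α * (degIn a' b' Q v : ℝ) ≤ (degIn a b P v : ℝ)) :
    α * (volIn a' b' Q S : ℝ) ≤ (volIn a b P S : ℝ) := by
  simp only [volIn, Nat.cast_sum, mul_sum]
  exact sum_le_sum hdeg

/-- The multigraph with endpoint maps `a, b`, restricted to the edges satisfying `P`, is a
`ψ`-expander: every proper cut has at least `ψ` times as many edges as the volume of its smaller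
side. No condition is put on `ψ`, so that the notion can be scaled freely. -/
def IsExpanderIn [Fintype X] (a b : E → X) (P : E → Prop) (ψ : ℝ) : Prop :=
  ∀ S : Finset X, S.Nonempty → S ≠ univ →
    ψ * min (volIn a b P S : ℝ) (volIn a b P Sᶜ : ℝ) ≤ (cutIn a b P S : ℝ)

theorem stmt11_general [Fintype X] {ψ α β : ℝ} (hψ : 0 ≤ ψ) (hα : 0 ≤ α) (hβ : 0 < β)
    (hexp : IsExpanderIn a b P ψ)
    (hdeg : ∀ v, α * (degIn a' b' Q v : ℝ) ≤ (degIn a b P v : ℝ))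
    (hcut : ∀ S, (cutIn a b P S : ℝ) ≤ β * (cutIn a' b' Q S : ℝ)) :
    IsExpanderIn a' b' Q (ψ * α / β) := by
  intro S hS hS_univ
  have hvol (T : Finset X) : α * (volIn a' b' Q T : ℝ) ≤ (volIn a b P T : ℝ) :=
    mul_volIn_le_volIn fun v _ ↦ hdeg v
  rw [div_mul_eq_mul_div, div_le_iff₀' hβ]
  calc ψ * α * min (volIn a' b' Q S : ℝ) (volIn a' b' Q Sᶜ : ℝ)
      = ψ * min (α * (volIn a' b' Q S : ℝ)) (α * (volIn a' b' Q Sᶜ : ℝ)) := by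
        rw [mul_assoc, mul_min_of_nonneg _ _ hα]
    _ ≤ ψ * min (volIn a b P S : ℝ) (volIn a b P Sᶜ : ℝ) :=
        mul_le_mul_of_nonneg_left (min_le_min (hvol S) (hvol Sᶜ)) hψ
    _ ≤ (cutIn a b P S : ℝ) := hexp S hS hS_univ
    _ ≤ β * (cutIn a' b' Q S : ℝ) := hcut S

end Expansion

/-- if a subgraph `H` (given by the kept edges `keep`) of a
`ψ`-expander `G` approximates all cuts of `G` within a factor `2` after rescaling by
`1/p`, then `H` is a `ψ/4`-expander. -/
theorem stmt11
    {X E : Type} [Fintype X] [Fintype E]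
    (a b : E → X) (hab : ∀ e, a e ≠ b e)
    (keep : E → Prop)
    (ψ : ℝ) (hψ0 : 0 < ψ) (hψ1 : ψ ≤ 1)
    (p : ℝ) (hp0 : 0 < p) (hp1 : p ≤ 1)
    (hexpG : ∀ S : Finset X, S.Nonempty → S ≠ univ →
      ψ * min (volIn a b (fun _ => True) S : ℝ) (volIn a b (fun _ => True) Sᶜ : ℝ)
        ≤ (cutIn a b (fun _ => True) S : ℝ))
    (hsand : ∀ S : Finset X,
      1 / 2 * (cutIn a b keep S : ℝ) / p ≤ (cutIn a b (fun _ => True) S : ℝ) ∧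
        (cutIn a b (fun _ => True) S : ℝ) ≤ 2 * (cutIn a b keep S : ℝ) / p) :
    ∀ S : Finset X, S.Nonempty → S ≠ univ →
      ψ / 4 * min (volIn a b keep S : ℝ) (volIn a b keep Sᶜ : ℝ)
        ≤ (cutIn a b keep S : ℝ) := by
  rw [show ψ / 4 = ψ * (1 / 2 / p) / (2 / p) by field_simp; norm_num]
  simp only [mul_div_right_comm] at hsand
  exact stmt11_general hψ0.le (by positivity) (by positivity) hexpG
    (fun v ↦ by simpa only [cutIn_singleton hab] using (hsand {v}).1) fun S ↦ (hsand S).2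
end
end

section
/- (Validity of rerouting a circulation through a spanner embedding.) Let C be a directed multigraph on vertex set V with arc set Ê (each arc having distinct endpoints) and lengths ℓ ∈ ℝ^{Ê}_{>0}, and let S be a subgraph of C with arc set E_S ⊆ Ê. Let γ_l ≥ 1 and let Π assign to each ê ∈ Ê a vector Π(ê) ∈ {−1,0,1}^{E_S} with at most γ_l nonzero entries such that B_S^⊤Π(ê) = b_ê and such that every ê′ ∈ E_S with Π(ê)_{ê′} ≠ 0 satisfies ℓ_{ê′} ≈₂ ℓ_ê. Let c ∈ ℝ^{Ê} be a circulation on C (B_C^⊤c = 0) and w ∈ ℝ^{Ê}_{>0} satisfy |ℓ_ê·c_ê| ≤ w_ê for all ê. Define c^S := Σ_{ê∈Ê} c_ê·Π(ê) ∈ ℝ^{E_S} and w^S := 2·Σ_{ê∈Ê} w_ê·|Π(ê)| ∈ ℝ^{E_S}. Then: (a) c^S is a circulation on S, i.e. B_S^⊤c^S = 0; (b) |ℓ_{ê′}·c^S_{ê′}| ≤ w^S_{ê′} for every ê′ ∈ E_S; and (c) ‖w‖₁ ≤ ‖w^S‖₁ ≤ 2·γ_l·‖w‖₁. -/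
/-!
Regard the embedding as a matrix `P` with rows indexed by the arcs of `C` and columns by the arcs of
`S`; that it routes every demand says `P * B_S = B_C`, whence `(c P) B_S = c B_C = 0`. The norm of
`w^S` is estimated row by row: routing one unit between distinct endpoints uses arcs of total
absolute weight at least `1`, since only arcs incident to the tail can meet the demand there, and
at most `γ` since each row has at most `γ` nonzero entries of absolute value at most `1`.
-/

open Finset
open scoped Classical

noncomputable section

open Matrix

section Matrix

variable {m n p R : Type*}

lemma vecMul_apply_eq_zero_of_support_subset [Fintype m] [NonUnitalNonAssocSemiring R]
    {M : Matrix m n R} {s : Finset n} (hM : ∀ i j, M i j ≠ 0 → j ∈ s) (v : m → R) {j : n}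
    (hj : j ∉ s) : (v ᵥ* M) j = 0 :=
  sum_eq_zero fun i _ => mul_eq_zero_of_right _ (of_not_not (mt (hM i j) hj))

variable [Fintype n] [Ring R] [LinearOrder R] [IsOrderedRing R]

lemma abs_mul_apply_le_sum_abs {M : Matrix m n R} {N : Matrix n p R} {k : p}
    (hN : ∀ j, |N j k| ≤ 1) (i : m) : |(M * N) i k| ≤ ∑ j, |M i j| :=
  calc |(M * N) i k| ≤ ∑ j, |M i j * N j k| := abs_sum_le_sum_abs _ _
    _ ≤ ∑ j, |M i j| := sum_le_sum fun j _ => by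
      rw [abs_mul]
      exact mul_le_of_le_one_right (abs_nonneg _) (hN j)

lemma sum_abs_le_card_support {f : n → R} [DecidablePred fun j => f j ≠ 0]
    (hf : ∀ j, |f j| ≤ 1) : ∑ j, |f j| ≤ #{j | f j ≠ 0} :=
  calc ∑ j, |f j| = ∑ j with f j ≠ 0, |f j| :=
        (sum_filter_of_ne fun _ _ => abs_ne_zero.mp).symm
    _ ≤ #{j | f j ≠ 0} := (sum_le_card_nsmul _ _ 1 fun j _ => hf j).trans_eq (nsmul_one _)

end Matrix

section IncidenceMatrix

variable {V E F : Type*} [DecidableEq V] (R : Type*) (tail head : E → V)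

/-- The arc–vertex incidence matrix of the directed multigraph with arcs `E` and endpoint maps
`tail` and `head`; its row at an arc is the demand of one unit of flow from tail to head. Entries
are differences of indicators, so a loop has the zero row. -/
def arcIncMatrix [Ring R] : Matrix E V R :=
  Matrix.of fun e v => (if tail e = v then 1 else 0) - if head e = v then 1 else 0

variable {R tail head}

lemma arcIncMatrix_apply_tail [Ring R] {e : E} (he : tail e ≠ head e) :
    arcIncMatrix R tail head e (tail e) = 1 := by
  simp [arcIncMatrix, he.symm]

variable [Ring R] [LinearOrder R] [IsOrderedRing R]

lemma abs_arcIncMatrix_apply_le_one (e : E) (v : V) : |arcIncMatrix R tail head e v| ≤ 1 := by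
  simp only [arcIncMatrix, Matrix.of_apply]
  split_ifs <;> simp

lemma one_le_sum_abs_of_mul_arcIncMatrix_eq [Fintype F] {tail' head' : F → V} {P : Matrix E F R}
    (hP : P * arcIncMatrix R tail' head' = arcIncMatrix R tail head) {e : E}
    (he : tail e ≠ head e) : 1 ≤ ∑ f, |P e f| :=
  calc (1 : R) = |(P * arcIncMatrix R tail' head') e (tail e)| := by
        rw [hP, arcIncMatrix_apply_tail he, abs_one]
    _ ≤ ∑ f, |P e f| := abs_mul_apply_le_sum_abs (abs_arcIncMatrix_apply_le_one · _) e

end IncidenceMatrix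

section Reroute

variable {E F R : Type*} [Fintype E] [CommRing R] [LinearOrder R] [IsOrderedRing R]

lemma abs_mul_vecMul_le {P : Matrix E F R} {ℓ : E → R} {ℓ' : F → R} {α : R} (hα : 0 ≤ α)
    {c w : E → R} {f : F} (hlen : ∀ e, P e f ≠ 0 → |ℓ' f| ≤ α * |ℓ e|)
    (hwc : ∀ e, |ℓ e * c e| ≤ w e) :
    |ℓ' f * (c ᵥ* P) f| ≤ α * (w ᵥ* P.map abs) f := by
  have hterm (e : E) : |ℓ' f * (c e * P e f)| ≤ α * (w e * |P e f|) := by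
    obtain hP | hP := eq_or_ne (P e f) 0
    · simp [hP]
    calc |ℓ' f * (c e * P e f)| = |ℓ' f| * (|c e| * |P e f|) := by simp only [abs_mul]
      _ ≤ α * |ℓ e| * (|c e| * |P e f|) := by gcongr; exact hlen e hP
      _ = α * (|ℓ e * c e| * |P e f|) := by rw [abs_mul]; ring
      _ ≤ α * (w e * |P e f|) := by gcongr; exact hwc e
  calc |ℓ' f * (c ᵥ* P) f| = |∑ e, ℓ' f * (c e * P e f)| := congrArg abs (mul_sum ..)
    _ ≤ ∑ e, α * (w e * |P e f|) :=
        (abs_sum_le_sum_abs _ _).trans (sum_le_sum fun e _ => hterm e)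
    _ = α * (w ᵥ* P.map abs) f := (mul_sum ..).symm

end Reroute

section WeightedRowSums

variable {m n R : Type*} [Fintype m] [Fintype n] [CommSemiring R]

lemma sum_vecMul_apply (w : m → R) (M : Matrix m n R) :
    ∑ j, (w ᵥ* M) j = ∑ i, w i * ∑ j, M i j := by
  simp only [vecMul, dotProduct, mul_sum]
  exact sum_comm

variable [PartialOrder R] [IsOrderedRing R] {w : m → R} {M : Matrix m n R} {γ : R}

lemma sum_vecMul_le (hw : ∀ i, 0 ≤ w i) (hM : ∀ i, ∑ j, M i j ≤ γ) :
    ∑ j, (w ᵥ* M) j ≤ γ * ∑ i, w i := by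
  rw [sum_vecMul_apply, mul_comm, sum_mul]
  exact sum_le_sum fun i _ => mul_le_mul_of_nonneg_left (hM i) (hw i)

lemma le_sum_vecMul (hw : ∀ i, 0 ≤ w i) (hM : ∀ i, γ ≤ ∑ j, M i j) :
    γ * ∑ i, w i ≤ ∑ j, (w ᵥ* M) j := by
  rw [sum_vecMul_apply, mul_comm, sum_mul]
  exact sum_le_sum fun i _ => mul_le_mul_of_nonneg_left (hM i) (hw i)

end WeightedRowSums

theorem stmt12_general {V E F R : Type*} [DecidableEq V] [Fintype E] [Fintype F]
    [CommRing R] [LinearOrder R] [IsOrderedRing R]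
    {tail head : E → V} (hth : ∀ e, tail e ≠ head e) {tail' head' : F → V}
    {ℓ : E → R} {ℓ' : F → R} {α γ : R} (hα : 1 ≤ α) {s : Finset F} {P : Matrix E F R}
    (hs : ∀ e f, P e f ≠ 0 → f ∈ s) (hγ : ∀ e, ∑ f, |P e f| ≤ γ)
    (hP : P * arcIncMatrix R tail' head' = arcIncMatrix R tail head)
    (hlen : ∀ e f, P e f ≠ 0 → |ℓ' f| ≤ α * |ℓ e|)
    {c w : E → R} (hc : c ᵥ* arcIncMatrix R tail head = 0) (hwc : ∀ e, |ℓ e * c e| ≤ w e) :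
    (∀ v, ∑ f ∈ s, (c ᵥ* P) f * arcIncMatrix R tail' head' f v = 0) ∧
      (∀ f ∈ s, |ℓ' f * (c ᵥ* P) f| ≤ α * (w ᵥ* P.map abs) f) ∧
      ∑ e, w e ≤ ∑ f ∈ s, α * (w ᵥ* P.map abs) f ∧
      ∑ f ∈ s, α * (w ᵥ* P.map abs) f ≤ α * γ * ∑ e, w e := by
  have hα₀ : 0 ≤ α := zero_le_one.trans hα
  have hw (e : E) : 0 ≤ w e := (abs_nonneg _).trans (hwc e)
  have hcirc : c ᵥ* P ᵥ* arcIncMatrix R tail' head' = 0 := by rw [vecMul_vecMul, hP, hc]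
  have hnorm : ∑ f ∈ s, (w ᵥ* P.map abs) f = ∑ f, (w ᵥ* P.map abs) f :=
    sum_subset s.subset_univ fun f _ hf =>
      vecMul_apply_eq_zero_of_support_subset (fun e f h => hs e f (abs_ne_zero.mp h)) w hf
  have hlower : 1 * ∑ e, w e ≤ ∑ f, (w ᵥ* P.map abs) f :=
    le_sum_vecMul hw fun e => one_le_sum_abs_of_mul_arcIncMatrix_eq hP (hth e)
  rw [← mul_sum, hnorm, mul_assoc]
  refine ⟨fun v => ?_, fun f _ => abs_mul_vecMul_le hα₀ (hlen · f) hwc, ?_, ?_⟩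
  · refine (sum_subset s.subset_univ fun f _ hf => ?_).trans (congrFun hcirc v)
    rw [vecMul_apply_eq_zero_of_support_subset hs c hf, zero_mul]
  · rw [one_mul] at hlower
    exact hlower.trans (le_mul_of_one_le_left ((sum_nonneg fun e _ => hw e).trans hlower) hα)
  · exact mul_le_mul_of_nonneg_left (sum_vecMul_le hw hγ) hα₀

/-- validity of rerouting a circulation through a spanner embedding:
given an embedding `emb` of each arc `ê` of the core graph `C` as a signed path vector in
the spanner `S` (arc set `ES`), with length ≤ `γl` and `2`-approximate lengths on its
support, the rerouted circulation `c^S = Σ_ê c_ê · emb ê` is a circulation on `S`, the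
rerouted widths `w^S = 2 Σ_ê w_ê |emb ê|` are valid length upper bounds, and
`‖w‖₁ ≤ ‖w^S‖₁ ≤ 2 γl ‖w‖₁`. -/
theorem stmt12
    {V Eh : Type} [Fintype V] [Fintype Eh] [DecidableEq V]
    (tail head : Eh → V) (hth : ∀ e, tail e ≠ head e)
    (ℓ : Eh → ℝ) (hℓ : ∀ e, 0 < ℓ e)
    (ES : Finset Eh)
    (γl : ℝ) (hγl : 1 ≤ γl)
    (emb : Eh → Eh → ℝ)
    (hval : ∀ e e', emb e e' = -1 ∨ emb e e' = 0 ∨ emb e e' = 1)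
    (hsupp : ∀ e e', emb e e' ≠ 0 → e' ∈ ES)
    (hcard : ∀ e, ((univ.filter fun e' => emb e e' ≠ 0).card : ℝ) ≤ γl)
    (hpath : ∀ e v,
      (∑ e', emb e e' *
          ((if tail e' = v then (1 : ℝ) else 0) - if head e' = v then 1 else 0))
        = (if tail e = v then (1 : ℝ) else 0) - if head e = v then 1 else 0)
    (hlen : ∀ e e', emb e e' ≠ 0 → ℓ e / 2 ≤ ℓ e' ∧ ℓ e' ≤ 2 * ℓ e)
    (c w : Eh → ℝ)
    (hcirc : ∀ v,
      (∑ e, c e * ((if tail e = v then (1 : ℝ) else 0) - if head e = v then 1 else 0)) = 0)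
    (hw : ∀ e, 0 < w e) (hwc : ∀ e, |ℓ e * c e| ≤ w e) :
    (∀ v, (∑ e' ∈ ES, (∑ e, c e * emb e e') *
        ((if tail e' = v then (1 : ℝ) else 0) - if head e' = v then 1 else 0)) = 0) ∧
      (∀ e' ∈ ES, |ℓ e' * ∑ e, c e * emb e e'| ≤ 2 * ∑ e, w e * |emb e e'|) ∧
      ((∑ e, w e) ≤ ∑ e' ∈ ES, 2 * ∑ e, w e * |emb e e'|) ∧
      (∑ e' ∈ ES, 2 * ∑ e, w e * |emb e e'|) ≤ 2 * γl * ∑ e, w e := by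
  have hemb (e e' : Eh) : |emb e e'| ≤ 1 := by rcases hval e e' with h | h | h <;> simp [h]
  have habs (e e' : Eh) (h : emb e e' ≠ 0) : |ℓ e'| ≤ 2 * |ℓ e| := by
    simpa only [abs_of_pos, hℓ] using (hlen e e' h).2
  exact stmt12_general hth one_le_two hsupp
    (fun e => (sum_abs_le_card_support (hemb e)).trans (hcard e)) (Matrix.ext hpath) habs
    (funext hcirc) hwc
end
end
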